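/- arXiv:2506.07694 — 4 statements merged into one kernel-verified Lean document; each statement's English description precedes it below -/
import Mathlib

section
/- Integration by parts: if u ∈ W^{s,p}(V), then for every finitely supported φ : V → ℝ, ∫_V φ · (−Δ)ₚˢu dμ = ∫_V |∇ˢu|^{p−2} ∇ˢu∇ˢφ dμ. -/
open Filter
open scoped BigOperators

noncomputable section

namespace FSG

variable {V : Type*}

/-- The fractional Dirichlet pairing `∇ˢu∇ˢv(x)`. -/
def gradPair (μ : V → ℝ) (W : V → V → ℝ) (u v : V → ℝ) (x : V) : ℝ :=
  (1 / (2 * μ x)) * ∑' y, W x y * (u x - u y) * (v x - v y)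

/-- The length of the fractional gradient `|∇ˢu|(x)`. -/
def gradNorm (μ : V → ℝ) (W : V → V → ℝ) (u : V → ℝ) (x : V) : ℝ :=
  Real.sqrt (gradPair μ W u u x)

/-- Boundedness of a real function on `V`. -/
def Bdd (u : V → ℝ) : Prop := ∃ C : ℝ, ∀ x, |u x| ≤ C

/-- Membership in the fractional Sobolev space `W^{s,p}(V)`. -/
def memW (μ : V → ℝ) (W : V → V → ℝ) (p : ℝ) (u : V → ℝ) : Prop :=
  Bdd u ∧ Summable (fun x => μ x * (gradNorm μ W u x ^ p + |u x| ^ p))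

/-- The `W^{s,p}(V)` norm. -/
def normW (μ : V → ℝ) (W : V → V → ℝ) (p : ℝ) (u : V → ℝ) : ℝ :=
  (∑' x, μ x * (gradNorm μ W u x ^ p + |u x| ^ p)) ^ (1 / p)

/-- Membership in `W₀^{s,p}(V)`, the closure of the finitely supported functions. -/
def memW0 (μ : V → ℝ) (W : V → V → ℝ) (p : ℝ) (u : V → ℝ) : Prop :=
  Bdd u ∧ ∃ v : ℕ → V → ℝ, (∀ n, (Function.support (v n)).Finite) ∧
    Tendsto (fun n => normW μ W p (v n - u)) atTop (nhds 0)

/-- The fractional `p`-Laplacian `(−Δ)ₚˢu(x)`. -/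
def pLap (μ : V → ℝ) (W : V → V → ℝ) (p : ℝ) (u : V → ℝ) (x : V) : ℝ :=
  (1 / (2 * μ x)) *
    ∑' y, W x y * (gradNorm μ W u x ^ (p - 2) + gradNorm μ W u y ^ (p - 2)) * (u x - u y)

/-- The norm `‖u‖_H` of the space `H_{s,p}(V)`. -/
def normH (μ : V → ℝ) (W : V → V → ℝ) (h : V → ℝ) (p : ℝ) (u : V → ℝ) : ℝ :=
  (∑' x, μ x * (gradNorm μ W u x ^ p + h x * |u x| ^ p)) ^ (1 / p)

/-- Membership in `H_{s,p}(V)`, the completion of `C_c(V)` under `‖·‖_H`,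
realized as a function space. -/
def memH (μ : V → ℝ) (W : V → V → ℝ) (h : V → ℝ) (p : ℝ) (u : V → ℝ) : Prop :=
  Bdd u ∧ ∃ v : ℕ → V → ℝ, (∀ n, (Function.support (v n)).Finite) ∧
    Tendsto (fun n => normH μ W h p (v n - u)) atTop (nhds 0)

/-- The primitive `F(x,y) = ∫₀^y f(x,t) dt`. -/
def Fint (f : V → ℝ → ℝ) (x : V) (y : ℝ) : ℝ := ∫ t in (0:ℝ)..y, f x t

/-- The energy functional `E(u)`. -/
def energy (μ : V → ℝ) (W : V → V → ℝ) (h : V → ℝ) (p : ℝ) (f : V → ℝ → ℝ)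
    (u : V → ℝ) : ℝ :=
  (1 / p) * (∑' x, μ x * (gradNorm μ W u x ^ p + h x * |u x| ^ p))
    - ∑' x, μ x * Fint f x (max (u x) 0)

/-- The pairing `⟨E′(u),φ⟩`. -/
def Epair (μ : V → ℝ) (W : V → V → ℝ) (h : V → ℝ) (p : ℝ) (f : V → ℝ → ℝ)
    (u φ : V → ℝ) : ℝ :=
  (∑' x, μ x * (gradNorm μ W u x ^ (p - 2) * gradPair μ W u φ x
      + h x * |u x| ^ (p - 2) * u x * φ x))
    - ∑' x, μ x * f x (max (u x) 0) * φ x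

/-- The first eigenvalue `λ_p`. -/
def lambdaP (μ : V → ℝ) (W : V → V → ℝ) (h : V → ℝ) (p : ℝ) : ℝ :=
  sInf {r : ℝ | ∃ u : V → ℝ, memH μ W h p u ∧ u ≠ 0 ∧
    r = (∑' x, μ x * (gradNorm μ W u x ^ p + h x * |u x| ^ p)) /
        (∑' x, μ x * |u x| ^ p)}

/-- The Nehari manifold `N`. -/
def memN (μ : V → ℝ) (W : V → V → ℝ) (h : V → ℝ) (p : ℝ) (f : V → ℝ → ℝ)
    (u : V → ℝ) : Prop :=
  memH μ W h p u ∧ u ≠ 0 ∧ Epair μ W h p f u u = 0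

/-- The Nehari infimum `e_{s,p}`. -/
def espInf (μ : V → ℝ) (W : V → V → ℝ) (h : V → ℝ) (p : ℝ) (f : V → ℝ → ℝ) : ℝ :=
  sInf {r : ℝ | ∃ u : V → ℝ, memN μ W h p f u ∧ r = energy μ W h p f u}

/-- Summability over the product of a kernel supported on finitely many rows. -/
theorem summable_rows {V : Type*} (W : V → V → ℝ) (hWnn : ∀ x y, 0 ≤ W x y)
    (hWsum : ∀ x, Summable (fun y => W x y)) (φ : V → ℝ) (hφ : (Function.support φ).Finite)
    (B : V → V → ℝ) (M : ℝ) (hM : 0 ≤ M) (hB : ∀ x y, |B x y| ≤ M * W x y) :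
    Summable (fun z : V × V => φ z.1 * B z.1 z.2) := by
  have h1 : Summable (fun z : V × V => |φ z.1| * (M * W z.1 z.2)) := by
    have hnn : 0 ≤ (fun z : V × V => |φ z.1| * (M * W z.1 z.2)) := fun z =>
      mul_nonneg (abs_nonneg _) (mul_nonneg hM (hWnn _ _))
    refine (summable_prod_of_nonneg hnn).2 ⟨?_, ?_⟩
    · intro x
      have h := (hWsum x).mul_left (|φ x| * M)
      refine h.congr ?_
      intro y
      ring
    · apply summable_of_hasFiniteSupport
      refine hφ.subset ?_
      intro x hx hx0
      apply hx
      simp [hx0]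
  refine Summable.of_norm_bounded h1 ?_
  intro z
  rw [Real.norm_eq_abs, abs_mul]
  exact mul_le_mul_of_nonneg_left (hB _ _) (abs_nonneg _)

/-- The weight `|∇ˢu|^(p-2)` is bounded for `u` in `W^{s,p}`. -/
theorem gradNorm_pow_bdd {V : Type*} (μ : V → ℝ) (hμ0 : ∃ c > 0, ∀ x : V, c ≤ μ x)
    (W : V → V → ℝ) (p : ℝ) (hp : 2 ≤ p) (u : V → ℝ) (hu : memW μ W p u) :
    ∃ M, 0 ≤ M ∧ ∀ x, |gradNorm μ W u x ^ (p - 2)| ≤ M := by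
  obtain ⟨c, hc, hcμ⟩ := hμ0
  obtain ⟨-, hs⟩ := hu
  set S := ∑' x, μ x * (gradNorm μ W u x ^ p + |u x| ^ p) with hS
  have hg : ∀ x, 0 ≤ gradNorm μ W u x := fun x => Real.sqrt_nonneg _
  have hnn : ∀ x, 0 ≤ μ x * (gradNorm μ W u x ^ p + |u x| ^ p) := by
    intro x
    have h1 := Real.rpow_nonneg (hg x) p
    have h2 := Real.rpow_nonneg (abs_nonneg (u x)) p
    have h3 : 0 < μ x := hc.trans_le (hcμ x)
    positivity
  have hS0 : 0 ≤ S := tsum_nonneg hnn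
  refine ⟨1 + S / c, by positivity, fun x => ?_⟩
  rw [abs_of_nonneg (Real.rpow_nonneg (hg x) _)]
  rcases le_total (gradNorm μ W u x) 1 with h | h
  · have := Real.rpow_le_one (hg x) h (by linarith : 0 ≤ p - 2)
    have : 0 ≤ S / c := by positivity
    linarith
  · have h1 : gradNorm μ W u x ^ (p - 2) ≤ gradNorm μ W u x ^ p :=
      Real.rpow_le_rpow_of_exponent_le h (by linarith)
    have h2 : gradNorm μ W u x ^ p ≤ S / c := by
      rw [le_div_iff₀ hc]
      have h3 : μ x * (gradNorm μ W u x ^ p + |u x| ^ p) ≤ S :=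
        hs.le_tsum x (fun y _ => hnn y)
      have h4 := Real.rpow_nonneg (hg x) p
      have h5 := Real.rpow_nonneg (abs_nonneg (u x)) p
      have h6 := hcμ x
      nlinarith [mul_nonneg (hc.le.trans h6) h5, mul_le_mul_of_nonneg_right h6 h4]
    linarith

/-- integration by parts for the fractional `p`-Laplacian. -/
theorem stmt_7 {V : Type*} [Countable V] [Infinite V]
    (μ : V → ℝ) (hμpos : ∀ x, 0 < μ x) (hμ0 : ∃ c > 0, ∀ x : V, c ≤ μ x)
    (W : V → V → ℝ) (hWnn : ∀ x y, 0 ≤ W x y) (hWsymm : ∀ x y, W x y = W y x)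
    (hWdiag : ∀ x, W x x = 0) (hWsum : ∀ x, Summable (fun y => W x y))
    (p : ℝ) (hp : 2 ≤ p)
    (u : V → ℝ) (hu : memW μ W p u)
    (φ : V → ℝ) (hφ : (Function.support φ).Finite) :
    ∑' x, μ x * (φ x * pLap μ W p u x)
      = ∑' x, μ x * (gradNorm μ W u x ^ (p - 2) * gradPair μ W u φ x) := by
  obtain ⟨M, hM0, hM⟩ := gradNorm_pow_bdd μ hμ0 W p hp u hu
  obtain ⟨C, hC⟩ := hu.1
  obtain ⟨a, ha⟩ : ∃ a : V → ℝ, ∀ x, a x = gradNorm μ W u x ^ (p - 2) := ⟨_, fun _ => rfl⟩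
  simp only [pLap, gradPair]
  simp only [← ha] at hM ⊢
  have hC0 : 0 ≤ C := by
    obtain ⟨x⟩ : Nonempty V := inferInstance
    exact (abs_nonneg _).trans (hC x)
  have hK : ∀ b : ℝ, |b| ≤ M → ∀ x y, |1 / 2 * (b * (W x y * (u x - u y)))| ≤ (M * C) * W x y := by
    intro b hb x y
    have h1 : |u x - u y| ≤ 2 * C := by
      have := abs_sub (u x) (u y)
      have := hC x
      have := hC y
      linarith
    have hw := hWnn x y
    rw [abs_mul, abs_mul, abs_mul, abs_of_nonneg hw, abs_of_nonneg (by norm_num : (0:ℝ) ≤ 1 / 2)]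
    calc 1 / 2 * (|b| * (W x y * |u x - u y|)) ≤ 1 / 2 * (M * (W x y * (2 * C))) := by gcongr
      _ = _ := by ring
  have hF := summable_rows W hWnn hWsum φ hφ
    (fun x y => 1 / 2 * (a x * (W x y * (u x - u y)))) (M * C) (by positivity)
    (fun x y => hK _ (hM x) x y)
  have hG := summable_rows W hWnn hWsum φ hφ
    (fun x y => 1 / 2 * (a y * (W x y * (u x - u y)))) (M * C) (by positivity)
    (fun x y => hK _ (hM y) x y)
  have hG' : Summable (fun z : V × V =>
      φ z.2 * (1 / 2 * (a z.1 * (W z.2 z.1 * (u z.2 - u z.1))))) := hG.prod_symm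
  have hL : ∀ x, μ x * (φ x * (1 / (2 * μ x) * ∑' y, W x y * (a x + a y) * (u x - u y)))
      = ∑' y, φ x * (1 / 2 * (a x * (W x y * (u x - u y))))
        + ∑' y, φ x * (1 / 2 * (a y * (W x y * (u x - u y)))) := by
    intro x
    rw [← (hF.prod_factor x).tsum_add (hG.prod_factor x)]
    have hx := (hμpos x).ne'
    rw [show μ x * (φ x * (1 / (2 * μ x) * ∑' y, W x y * (a x + a y) * (u x - u y)))
      = (φ x / 2) * ∑' y, W x y * (a x + a y) * (u x - u y) by field_simp, ← tsum_mul_left]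
    exact tsum_congr fun y => by ring
  have hR : ∀ x, μ x * (a x * (1 / (2 * μ x) * ∑' y, W x y * (u x - u y) * (φ x - φ y)))
      = ∑' y, φ x * (1 / 2 * (a x * (W x y * (u x - u y))))
        + ∑' y, φ y * (1 / 2 * (a x * (W y x * (u y - u x)))) := by
    intro x
    rw [← (hF.prod_factor x).tsum_add (hG'.prod_factor x)]
    have hx := (hμpos x).ne'
    rw [show μ x * (a x * (1 / (2 * μ x) * ∑' y, W x y * (u x - u y) * (φ x - φ y)))
      = (a x / 2) * ∑' y, W x y * (u x - u y) * (φ x - φ y) by field_simp, ← tsum_mul_left]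
    exact tsum_congr fun y => by rw [hWsymm y x]; ring
  simp only [hL, hR]
  rw [Summable.tsum_add hF.prod hG.prod, Summable.tsum_add hF.prod hG'.prod]
  congr 1
  exact Summable.tsum_comm (f := fun y x => φ x * (1 / 2 * (a y * (W x y * (u x - u y))))) hG' |>.symm ▸ rfl

end FSG
end
end

section
/- For all real numbers a, b with ab ≥ 0, (|a|^{p−2}a − |b|^{p−2}b)(a − b) ≥ |a − b|^p. -/
open Filter
open scoped BigOperators

noncomputable section

namespace FSG

variable {V : Type*}

lemma aux_ordered (p : ℝ) (hp : 2 ≤ p) (a b : ℝ) (hb : 0 ≤ b) (h : b ≤ a) :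
    (a - b) ^ p ≤ (a ^ (p - 2) * a - b ^ (p - 2) * b) * (a - b) := by
  have hd : 0 ≤ a - b := sub_nonneg.2 h
  have h1 : b ^ (p - 2) ≤ a ^ (p - 2) := Real.rpow_le_rpow hb h (by linarith)
  have h2 : (a - b) ^ (p - 2) ≤ a ^ (p - 2) := Real.rpow_le_rpow hd (by linarith) (by linarith)
  have h3 : (a - b) ^ p = (a - b) ^ (p - 2) * (a - b) * (a - b) := by
    rcases hd.eq_or_lt with h0 | h0
    · rw [← h0, Real.zero_rpow (by linarith)]; simp
    · rw [mul_assoc, ← pow_two, ← Real.rpow_natCast (a - b) 2, ← Real.rpow_add h0]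
      norm_num
  rw [h3]
  apply mul_le_mul_of_nonneg_right _ hd
  nlinarith [mul_le_mul_of_nonneg_right h1 hb, mul_le_mul_of_nonneg_right h2 hd]

lemma aux_nonneg (p : ℝ) (hp : 2 ≤ p) (a b : ℝ) (ha : 0 ≤ a) (hb : 0 ≤ b) :
    |a - b| ^ p ≤ (|a| ^ (p - 2) * a - |b| ^ (p - 2) * b) * (a - b) := by
  rw [abs_of_nonneg ha, abs_of_nonneg hb]
  rcases le_total b a with h | h
  · rw [abs_of_nonneg (sub_nonneg.2 h)]
    exact aux_ordered p hp a b hb h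
  · rw [abs_sub_comm, abs_of_nonneg (sub_nonneg.2 h)]
    linarith [aux_ordered p hp b a ha h]

/-- the elementary inequality
`(|a|^{p−2}a − |b|^{p−2}b)(a − b) ≥ |a − b|^p` for `ab ≥ 0`. -/
theorem stmt_10 (p : ℝ) (hp : 2 ≤ p) (a b : ℝ) (hab : 0 ≤ a * b) :
    (|a| ^ (p - 2) * a - |b| ^ (p - 2) * b) * (a - b) ≥ |a - b| ^ p := by
  rcases mul_nonneg_iff.1 hab with ⟨ha, hb⟩ | ⟨ha, hb⟩
  · exact aux_nonneg p hp a b ha hb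
  · have := aux_nonneg p hp (-a) (-b) (by linarith) (by linarith)
    rw [abs_neg, abs_neg, show -a - -b = -(a - b) by ring, abs_neg] at this
    linarith

end FSG
end
end

section
/- For all vectors a, b in a real inner product space H (for instance ℓ²(ℕ;ℝ)) one has ⟨‖a‖^{p−2}a − ‖b‖^{p−2}b, a − b⟩ ≥ (1/(2^{p−2}p)) ‖a − b‖^p. -/
open Filter
open scoped BigOperators

noncomputable section

namespace FSG

variable {V : Type*}

open scoped RealInnerProductSpace in
/-- the vector inequality
`⟨‖a‖^{p−2}a − ‖b‖^{p−2}b, a − b⟩ ≥ ‖a − b‖^p / (2^{p−2} p)`. -/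
theorem stmt_11 (p : ℝ) (hp : 2 ≤ p) {H : Type*} [NormedAddCommGroup H]
    [InnerProductSpace ℝ H] (a b : H) :
    ⟪‖a‖ ^ (p - 2) • a - ‖b‖ ^ (p - 2) • b, a - b⟫
      ≥ (1 / (2 ^ (p - 2) * p)) * ‖a - b‖ ^ p := by
  have hx := norm_nonneg a
  have hy := norm_nonneg b
  have hd := norm_nonneg (a - b)
  have hq : 0 ≤ p - 2 := by linarith
  have hpow : ‖a - b‖ ^ p = ‖a - b‖ ^ (p - 2) * ‖a - b‖ ^ 2 := by
    rw [← Real.rpow_natCast ‖a - b‖ 2, ← Real.rpow_add_of_nonneg hd hq (by norm_num)]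
    congr 1
    push_cast
    ring
  have hnorm := norm_sub_sq_real a b
  have hmono : 0 ≤ (‖a‖ ^ (p - 2) - ‖b‖ ^ (p - 2)) * (‖a‖ ^ 2 - ‖b‖ ^ 2) := by
    rcases le_total ‖a‖ ‖b‖ with h | h
    · have h1 := Real.rpow_le_rpow hx h hq
      have h2 := pow_le_pow_left₀ hx h 2
      exact mul_nonneg_of_nonpos_of_nonpos (by linarith) (by linarith)
    · have h1 := Real.rpow_le_rpow hy h hq
      have h2 := pow_le_pow_left₀ hy h 2
      exact mul_nonneg (by linarith) (by linarith)
  have hA : 0 ≤ ‖a‖ ^ (p - 2) := Real.rpow_nonneg hx _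
  have hB : 0 ≤ ‖b‖ ^ (p - 2) := Real.rpow_nonneg hy _
  have hT : (0 : ℝ) < 2 ^ (p - 2) := Real.rpow_pos_of_pos (by norm_num) _
  have htri := norm_sub_le a b
  have hkey : ‖a - b‖ ^ (p - 2) ≤ 2 ^ (p - 2) * (‖a‖ ^ (p - 2) + ‖b‖ ^ (p - 2)) := by
    rcases le_total ‖a‖ ‖b‖ with h | h
    · have h1 := Real.rpow_le_rpow hd (show ‖a - b‖ ≤ 2 * ‖b‖ by linarith) hq
      rw [Real.mul_rpow (by norm_num) hy] at h1
      nlinarith [mul_nonneg hT.le hA]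
    · have h1 := Real.rpow_le_rpow hd (show ‖a - b‖ ≤ 2 * ‖a‖ by linarith) hq
      rw [Real.mul_rpow (by norm_num) hx] at h1
      nlinarith [mul_nonneg hT.le hB]
  have hid : ⟪‖a‖ ^ (p - 2) • a - ‖b‖ ^ (p - 2) • b, a - b⟫
      = (‖a‖ ^ (p - 2) + ‖b‖ ^ (p - 2)) / 2 * ‖a - b‖ ^ 2
        + (‖a‖ ^ (p - 2) - ‖b‖ ^ (p - 2)) * (‖a‖ ^ 2 - ‖b‖ ^ 2) / 2 := by
    rw [hnorm]
    simp only [inner_sub_left, inner_sub_right, real_inner_smul_left,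
      real_inner_self_eq_norm_sq, real_inner_comm a b]
    ring
  have hc : 1 / (2 ^ (p - 2) * p) * ‖a - b‖ ^ (p - 2)
      ≤ (‖a‖ ^ (p - 2) + ‖b‖ ^ (p - 2)) / 2 := by
    rw [one_div_mul_eq_div, div_le_div_iff₀ (by positivity) (by norm_num)]
    have h3 := mul_nonneg (mul_nonneg hT.le (add_nonneg hA hB)) hq
    nlinarith
  have hfin := mul_le_mul_of_nonneg_right hc (sq_nonneg ‖a - b‖)
  rw [hid, hpow, ge_iff_le, ← mul_assoc]
  linarith

end FSG
end
end

section
/- For every real p ≥ 2, every t ∈ (0,1) and every m ∈ [−1,1], (1 + t^p − (t^{p−1} + t)m) / (1 + t² − 2tm)^{p/2} ≥ 1/(2^{p−2} p). (Note 1 + t² − 2tm ≥ (1−t)² > 0, so the quotient is well defined.) -/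
open Filter
open scoped BigOperators

noncomputable section

namespace FSG

variable {V : Type*}

/-- the scalar inequality `φ(t,m) ≥ 1/(2^{p−2}p)`. -/
theorem stmt_12 (p t m : ℝ) (hp : 2 ≤ p) (ht : t ∈ Set.Ioo (0:ℝ) 1)
    (hm : m ∈ Set.Icc (-1 : ℝ) 1) :
    (1 + t ^ p - (t ^ (p - 1) + t) * m) / (1 + t ^ 2 - 2 * t * m) ^ (p / 2)
      ≥ 1 / (2 ^ (p - 2) * p) := by
  obtain ⟨t0, t1⟩ := ht
  obtain ⟨m0, m1⟩ := hm
  have e1 : t ^ p = t ^ (p - 2) * t ^ 2 := by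
    rw [← Real.rpow_natCast t 2, ← Real.rpow_add t0]; norm_num
  have e2 : t ^ (p - 1) = t ^ (p - 2) * t := by
    have h := Real.rpow_add t0 (p - 2) 1
    rw [Real.rpow_one] at h
    rw [← h]; congr 1; ring
  have s0 : 0 < t ^ (p - 2) := Real.rpow_pos_of_pos t0 _
  have s1 : t ^ (p - 2) ≤ 1 := Real.rpow_le_one t0.le t1.le (by linarith)
  rw [e1, e2]
  generalize t ^ (p - 2) = s at s0 s1
  have hD0 : 0 < 1 + t ^ 2 - 2 * t * m := by nlinarith [mul_le_mul_of_nonneg_left m1 t0.le, sq_pos_of_pos (sub_pos.2 t1)]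
  have hD4 : 1 + t ^ 2 - 2 * t * m ≤ 4 := by nlinarith [mul_le_mul_of_nonneg_left m0 t0.le]
  have hN : (1 + t ^ 2 - 2 * t * m) / 2 ≤ 1 + s * t ^ 2 - (s * t + t) * m := by
    have h1 : 0 ≤ (1 - t ^ 2) * (1 - s) := mul_nonneg (by nlinarith) (by linarith)
    have h2 : 0 ≤ s * (1 + t ^ 2 - 2 * t * m) := mul_nonneg s0.le hD0.le
    nlinarith
  generalize 1 + t ^ 2 - 2 * t * m = D at *
  have hP : D ^ (p / 2) ≤ D * 2 ^ (p - 2) := by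
    have h1 : D ^ (p / 2) = D * D ^ ((p - 2) / 2) := by
      have h := Real.rpow_add hD0 1 ((p - 2) / 2)
      rw [Real.rpow_one] at h
      rw [← h]; congr 1; ring
    have h2 : D ^ ((p - 2) / 2) ≤ 4 ^ ((p - 2) / 2) :=
      Real.rpow_le_rpow hD0.le hD4 (by linarith)
    have h3 : (4 : ℝ) ^ ((p - 2) / 2) = 2 ^ (p - 2) := by
      rw [show (4 : ℝ) = 2 ^ (2 : ℝ) by norm_num, ← Real.rpow_mul (by norm_num)]
      congr 1; ring
    rw [h1, ← h3]
    exact mul_le_mul_of_nonneg_left h2 hD0.le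
  have hE : (0 : ℝ) < 2 ^ (p - 2) := Real.rpow_pos_of_pos (by norm_num) _
  rw [ge_iff_le, div_le_div_iff₀ (by positivity) (Real.rpow_pos_of_pos hD0 _), one_mul]
  calc D ^ (p / 2) ≤ D * 2 ^ (p - 2) := hP
    _ = D / 2 * (2 ^ (p - 2) * 2) := by ring
    _ ≤ _ := by
      gcongr
      linarith

end FSG
end
end
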